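/- arXiv:1206.0411 — 2 statements merged into one kernel-verified Lean document; each statement's English description precedes it below -/
import Mathlib

section
/- Every element of U(q) can be written in the form S(a,b,c) for a unique triple (a,b,c) ∈ F_q^3; in particular, the map (a,b,c) ↦ S(a,b,c) is a bijection from F_q^3 onto U(q), and |U(q)| = q^3. -/
open Matrix

set_option linter.unusedSectionVars false

noncomputable section

namespace ReePaper

variable {F : Type*} [Field F] [Fintype F]

/-- The matrix `α(x)`. -/
def amat (t : ℕ) (x : F) : Matrix (Fin 7) (Fin 7) F :=
  !![1, x^t, 0, 0, -x^(3*t+1), -x^(3*t+2), x^(4*t+2);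
     0, 1, x, x^(t+1), -x^(2*t+1), 0, -x^(3*t+2);
     0, 0, 1, x^t, -x^(2*t), 0, x^(3*t+1);
     0, 0, 0, 1, x^t, 0, 0;
     0, 0, 0, 0, 1, -x, x^(t+1);
     0, 0, 0, 0, 0, 1, -x^t;
     0, 0, 0, 0, 0, 0, 1]

/-- The matrix `β(x)`. -/
def bmat (t : ℕ) (x : F) : Matrix (Fin 7) (Fin 7) F :=
  !![1, 0, -x^t, 0, -x, 0, -x^(t+1);
     0, 1, 0, x^t, 0, -x^(2*t), 0;
     0, 0, 1, 0, 0, 0, x;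
     0, 0, 0, 1, 0, x^t, 0;
     0, 0, 0, 0, 1, 0, x^t;
     0, 0, 0, 0, 0, 1, 0;
     0, 0, 0, 0, 0, 0, 1]

/-- The matrix `γ(x)`. -/
def cmat (t : ℕ) (x : F) : Matrix (Fin 7) (Fin 7) F :=
  !![1, 0, 0, -x^t, 0, -x, -x^(2*t);
     0, 1, 0, 0, -x^t, 0, x;
     0, 0, 1, 0, 0, x^t, 0;
     0, 0, 0, 1, 0, 0, -x^t;
     0, 0, 0, 0, 1, 0, 0;
     0, 0, 0, 0, 0, 1, 0;
     0, 0, 0, 0, 0, 0, 1]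

/-- The diagonal matrix `h(λ)`. -/
def hmat (t : ℕ) (l : Fˣ) : Matrix (Fin 7) (Fin 7) F :=
  Matrix.diagonal ![((l ^ (t : ℤ) : Fˣ) : F), ((l ^ (1 - (t : ℤ)) : Fˣ) : F),
    ((l ^ (2 * (t : ℤ) - 1) : Fˣ) : F), 1, ((l ^ (1 - 2 * (t : ℤ)) : Fˣ) : F),
    ((l ^ ((t : ℤ) - 1) : Fˣ) : F), ((l ^ (-(t : ℤ)) : Fˣ) : F)]

/-- The matrix `Υ`, the antidiagonal matrix with all entries `-1`. -/
def ups : Matrix (Fin 7) (Fin 7) F :=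
  !![0, 0, 0, 0, 0, 0, -1;
     0, 0, 0, 0, 0, -1, 0;
     0, 0, 0, 0, -1, 0, 0;
     0, 0, 0, -1, 0, 0, 0;
     0, 0, -1, 0, 0, 0, 0;
     0, -1, 0, 0, 0, 0, 0;
     -1, 0, 0, 0, 0, 0, 0]

/-- `S(a, b, c) = α(a) β(b) γ(c)`. -/
def Smat (t : ℕ) (a b c : F) : Matrix (Fin 7) (Fin 7) F :=
  amat t a * bmat t b * cmat t c

/-- The Ree group `Ree(q) = ⟨α(x), β(x), γ(x), h(λ), Υ⟩ ≤ GL(7, q)`. -/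
def ReeGroup (t : ℕ) : Subgroup (GL (Fin 7) F) :=
  Subgroup.closure {g : GL (Fin 7) F |
    (∃ x : F, (g : Matrix (Fin 7) (Fin 7) F) = amat t x) ∨
    (∃ x : F, (g : Matrix (Fin 7) (Fin 7) F) = bmat t x) ∨
    (∃ x : F, (g : Matrix (Fin 7) (Fin 7) F) = cmat t x) ∨
    (∃ l : Fˣ, (g : Matrix (Fin 7) (Fin 7) F) = hmat t l) ∨
    (g : Matrix (Fin 7) (Fin 7) F) = ups}

/-- The subgroup `U(q) = ⟨α(x), β(x), γ(x)⟩`. -/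
def Usub (t : ℕ) : Subgroup (GL (Fin 7) F) :=
  Subgroup.closure {g : GL (Fin 7) F |
    (∃ x : F, (g : Matrix (Fin 7) (Fin 7) F) = amat t x) ∨
    (∃ x : F, (g : Matrix (Fin 7) (Fin 7) F) = bmat t x) ∨
    (∃ x : F, (g : Matrix (Fin 7) (Fin 7) F) = cmat t x)}

/-- The subgroup `H(q) = {h(λ) : λ ∈ F_q^×}`. -/
def Hsub (t : ℕ) : Subgroup (GL (Fin 7) F) :=
  Subgroup.closure {g : GL (Fin 7) F |
    ∃ l : Fˣ, (g : Matrix (Fin 7) (Fin 7) F) = hmat t l}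

end ReePaper

open ReePaper

namespace ReeAux

variable {F : Type*} [Field F]

/-- `α(x)` with `X` in place of `x^t`. -/
def am (x X : F) : Matrix (Fin 7) (Fin 7) F :=
  !![1, X, 0, 0, -(X^3*x), -(X^3*x^2), X^4*x^2;
     0, 1, x, X*x, -(X^2*x), 0, -(X^3*x^2);
     0, 0, 1, X, -X^2, 0, X^3*x;
     0, 0, 0, 1, X, 0, 0;
     0, 0, 0, 0, 1, -x, X*x;
     0, 0, 0, 0, 0, 1, -X;
     0, 0, 0, 0, 0, 0, 1]

/-- `β(x)` with `X` in place of `x^t`. -/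
def bm (x X : F) : Matrix (Fin 7) (Fin 7) F :=
  !![1, 0, -X, 0, -x, 0, -(X*x);
     0, 1, 0, X, 0, -X^2, 0;
     0, 0, 1, 0, 0, 0, x;
     0, 0, 0, 1, 0, X, 0;
     0, 0, 0, 0, 1, 0, X;
     0, 0, 0, 0, 0, 1, 0;
     0, 0, 0, 0, 0, 0, 1]

/-- `γ(x)` with `X` in place of `x^t`. -/
def cm (x X : F) : Matrix (Fin 7) (Fin 7) F :=
  !![1, 0, 0, -X, 0, -x, -X^2;
     0, 1, 0, 0, -X, 0, x;
     0, 0, 1, 0, 0, X, 0;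
     0, 0, 0, 1, 0, 0, -X;
     0, 0, 0, 0, 1, 0, 0;
     0, 0, 0, 0, 0, 1, 0;
     0, 0, 0, 0, 0, 0, 1]

theorem amat_eq (t : ℕ) (x : F) [Fintype F] : amat t x = am x (x ^ t) := by
  simp only [amat, am, pow_add, pow_mul', pow_one]

theorem bmat_eq (t : ℕ) (x : F) [Fintype F] : bmat t x = bm x (x ^ t) := by
  simp only [bmat, bm, pow_add, pow_mul', pow_one]

theorem cmat_eq (t : ℕ) (x : F) [Fintype F] : cmat t x = cm x (x ^ t) := by
  simp only [cmat, cm, pow_mul']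

/-- The product `α β γ`. -/
def sm (a A b B c C : F) : Matrix (Fin 7) (Fin 7) F := am a A * bm b B * cm c C

theorem Smat_eq (t : ℕ) (a b c : F) [Fintype F] :
    Smat t a b c = sm a (a ^ t) b (b ^ t) c (c ^ t) := by
  simp only [Smat, sm, amat_eq, bmat_eq, cmat_eq]

theorem bm_cm (b B c C : F) : bm b B * cm c C =
  !![1, 0, -B, -C, -b, -c - B*C, -C^2 - B*b;
     0, 1, 0, B, -C, -B^2, c - B*C;
     0, 0, 1, 0, 0, C, b;
     0, 0, 0, 1, 0, B, -C;
     0, 0, 0, 0, 1, 0, B;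
     0, 0, 0, 0, 0, 1, 0;
     0, 0, 0, 0, 0, 0, 1] := by
  ext i j
  fin_cases i <;> fin_cases j <;>
    simp [bm, cm, Matrix.mul_apply, Fin.sum_univ_succ] <;> ring

theorem sm_eq (a A b B c C : F) : sm a A b B c C =
  !![1, A, -(B), -(C) + A*B,
       -(A*C) - b - A^3*a, -(c) - B*C - A*B^2 - A^3*a^2,
       -(C^2) + A*c - A*B*C - B*b - A^3*B*a + A^4*a^2;
     0, 1, a, B + A*a,
       -(C) - A^2*a, C*a - B^2 + A*B*a,
       c - B*C - A*C*a + a*b - A^2*B*a - A^3*a^2;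
     0, 0, 1, A, -(A^2), C + A*B, -(A*C) + b - A^2*B + A^3*a;
     0, 0, 0, 1, A, B, -(C) + A*B;
     0, 0, 0, 0, 1, -(a), B + A*a;
     0, 0, 0, 0, 0, 1, -(A);
     0, 0, 0, 0, 0, 0, 1] := by
  simp only [sm, Matrix.mul_assoc _ (bm _ _) (cm _ _), bm_cm]
  ext i j
  fin_cases i <;> fin_cases j <;>
    simp [am, Matrix.mul_apply, Fin.sum_univ_succ] <;> ring

/-- The error term (before division by 3) in the multiplication formula. -/
def em (a A B C x X Y Z : F) : Matrix (Fin 7) (Fin 7) F :=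
  !![0, 0, 0, A*X*x - B*X,
       A*X^2*x + A^2*X*a + A^2*X*x + A*X^2*a, A*B*Y + A^3*a*x + X^3*a*x - A^2*B*x - A^2*Y*x + A^2*X*x^2 + A^3*x^2 + A^2*X*a^2 + 2*A^2*X*a*x + A*X^2*a^2 + 2*A*X^2*a*x + A*X^2*x^2,
       A*X^2*Y*x - 2*A*X^3*x^2 + C*Z - 4*A^3*X*a*x - A^3*X*a^2 - A^2*C*x - A^2*Z*x + 2*A^2*B*X*x - 3*A^3*X*x^2 - 3*A*X^3*a*x - A*X^3*a^2 - X^4*a*x - A^4*a*x + A^2*B*X*a + A^2*X*Y*a + A^2*X*Y*x + A*B*X^2*a + A*X^2*Y*a - 5*A^2*X^2*a*x + A*B*X^2*x - 3*A^2*X^2*x^2 - 2*A^2*X^2*a^2;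
     0, 0, 0, 0,
       A*X*a + A*X*x, B*Y + A^2*a*x + A^2*x^2 - A*B*x - A*Y*x,
       X^3*a*x + A*X*Y*a + A^2*X*a*x + X^3*a^2 + A*B*X*x + A*X*Y*x + 2*A*X^2*a*x + A*X^2*x^2 + A^2*X*a^2 + A*X^2*a^2;
     0, 0, 0, 0,
       A*X, A^2*x,
       A*X*Y - 2*A^2*X*x - A^3*x - A*X^2*x - A^2*X*a - A*X^2*a;
     0, 0, 0, 0, 0, 0, A*X*x - B*X;
     0, 0, 0, 0, 0, 0, 0;
     0, 0, 0, 0, 0, 0, 0;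
     0, 0, 0, 0, 0, 0, 0]

set_option maxHeartbeats 1000000 in
theorem sm_mul_aux (a A b B c C x X y Y z Z : F) :
    sm a A b B c C * sm x X y Y z Z =
      sm (a+x) (A+X) (b+y-a*X^3) (B+Y-A*x) (c+z-x*b+a*x*X^3-a^2*X^3)
        (C+Z-X*B+A*X*x-A^2*x) + (3 : F) • em a A B C x X Y Z := by
  simp only [sm_eq, em]
  ext i j
  fin_cases i <;> fin_cases j <;>
    simp [Matrix.mul_apply, Fin.sum_univ_succ] <;> ring

theorem sm_mul (h3 : (3 : F) = 0) (a A b B c C x X y Y z Z : F) :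
    sm a A b B c C * sm x X y Y z Z =
      sm (a+x) (A+X) (b+y-a*X^3) (B+Y-A*x) (c+z-x*b+a*x*X^3-a^2*X^3)
        (C+Z-X*B+A*X*x-A^2*x) := by
  rw [sm_mul_aux, h3, zero_smul, add_zero]

theorem sm_entries (a A b B c C : F) :
    sm a A b B c C 0 1 = A ∧ sm a A b B c C 0 2 = -B ∧ sm a A b B c C 0 3 = -C + A*B ∧
    sm a A b B c C 0 4 = -(A*C) - b - A^3*a ∧
    sm a A b B c C 0 5 = -c - B*C - A*B^2 - A^3*a^2 ∧ sm a A b B c C 1 2 = a := by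
  simp only [sm, Matrix.mul_assoc _ (bm _ _) (cm _ _), bm_cm]
  refine ⟨?_, ?_, ?_, ?_, ?_, ?_⟩ <;>
    simp [am, Matrix.mul_apply, Fin.sum_univ_succ] <;> ring

theorem sm_inj {a A b B c C x X y Y z Z : F} (h : sm a A b B c C = sm x X y Y z Z) :
    a = x ∧ b = y ∧ c = z := by
  obtain ⟨h1, h2, h3, h4, h5, h6⟩ := sm_entries a A b B c C
  obtain ⟨k1, k2, k3, k4, k5, k6⟩ := sm_entries x X y Y z Z
  rw [h] at h1 h2 h3 h4 h5 h6
  have e1 : A = X := by rw [← h1, k1]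
  have e2 : B = Y := by linear_combination h2 - k2
  have e6 : a = x := by rw [← h6, k6]
  subst e1 e2 e6
  have e3 : C = Z := by linear_combination h3 - k3
  subst e3
  exact ⟨rfl, by linear_combination h4 - k4, by linear_combination h5 - k5⟩

theorem am_zero : am (0 : F) 0 = 1 := by
  ext i j
  fin_cases i <;> fin_cases j <;> simp [am]

theorem bm_zero : bm (0 : F) 0 = 1 := by
  ext i j
  fin_cases i <;> fin_cases j <;> simp [bm]

theorem cm_zero : cm (0 : F) 0 = 1 := by
  ext i j
  fin_cases i <;> fin_cases j <;> simp [cm]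

section
variable [Fintype F] {m : ℕ}

theorem charP_three (hF : Fintype.card F = 3 ^ (2 * m + 1)) : CharP F 3 := by
  have : Fact (Nat.Prime 3) := ⟨Nat.prime_three⟩
  exact charP_of_card_eq_prime_pow hF

theorem pow_theta (hF : Fintype.card F = 3 ^ (2 * m + 1)) (x : F) :
    ((x ^ 3 ^ m) ^ 3) ^ 3 ^ m = x := by
  have h := FiniteField.pow_card x
  rw [hF] at h
  rw [← pow_mul, ← pow_mul]
  convert h using 2
  ring

theorem Smat_mul (hF : Fintype.card F = 3 ^ (2 * m + 1)) (a b c x y z : F) :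
    Smat (3 ^ m) a b c * Smat (3 ^ m) x y z =
      Smat (3 ^ m) (a+x) (b+y-a*(x^3^m)^3)
        (c+z-x*b+a*x*(x^3^m)^3-a^2*(x^3^m)^3) := by
  have : Fact (Nat.Prime 3) := ⟨Nat.prime_three⟩
  have := charP_three hF
  have h3 : (3 : F) = 0 := by exact_mod_cast CharP.cast_eq_zero F 3
  simp only [Smat_eq, sm_mul h3, add_pow_char_pow, sub_pow_char_pow, mul_pow, pow_theta hF]
  congr 1
  rw [pow_right_comm]

theorem amat_zero (t : ℕ) (ht : t ≠ 0) : amat t (0 : F) = 1 := by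
  rw [amat_eq, zero_pow ht, am_zero]

theorem bmat_zero (t : ℕ) (ht : t ≠ 0) : bmat t (0 : F) = 1 := by
  rw [bmat_eq, zero_pow ht, bm_zero]

theorem cmat_zero (t : ℕ) (ht : t ≠ 0) : cmat t (0 : F) = 1 := by
  rw [cmat_eq, zero_pow ht, cm_zero]

theorem Smat_zero (t : ℕ) (ht : t ≠ 0) : Smat t (0 : F) 0 0 = 1 := by
  simp [Smat, amat_zero t ht, bmat_zero t ht, cmat_zero t ht]

theorem Smat_inv (hF : Fintype.card F = 3 ^ (2 * m + 1)) (a b c : F) :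
    ∃ x y z : F, Smat (3 ^ m) a b c * Smat (3 ^ m) x y z = 1 := by
  refine ⟨-a, -b + a * ((-a)^3^m)^3,
    -c + (-a) * b - a * (-a) * ((-a)^3^m)^3 + a^2 * ((-a)^3^m)^3, ?_⟩
  rw [Smat_mul hF, ← Smat_zero (3 ^ m) (by positivity)]
  congr 1 <;> ring

theorem exists_unit (hF : Fintype.card F = 3 ^ (2 * m + 1)) (a b c : F) :
    ∃ g : GL (Fin 7) F, (g : Matrix (Fin 7) (Fin 7) F) = Smat (3 ^ m) a b c := by
  obtain ⟨x, y, z, h⟩ := Smat_inv hF a b c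
  exact ⟨⟨_, _, h, mul_eq_one_comm.mp h⟩, rfl⟩

theorem exists_mem (hF : Fintype.card F = 3 ^ (2 * m + 1)) (a b c : F) :
    ∃ g : GL (Fin 7) F, g ∈ Usub (F := F) (3 ^ m) ∧
      (g : Matrix (Fin 7) (Fin 7) F) = Smat (3 ^ m) a b c := by
  have ht : 3 ^ m ≠ 0 := by positivity
  obtain ⟨g1, h1⟩ := exists_unit hF a 0 0
  obtain ⟨g2, h2⟩ := exists_unit hF 0 b 0
  obtain ⟨g3, h3⟩ := exists_unit hF 0 0 c
  simp only [Smat, amat_zero _ ht, bmat_zero _ ht, cmat_zero _ ht, mul_one, one_mul] at h1 h2 h3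
  refine ⟨g1 * g2 * g3, mul_mem (mul_mem ?_ ?_) ?_, by simp [Smat, h1, h2, h3]⟩
  · exact Subgroup.subset_closure (Or.inl ⟨a, h1⟩)
  · exact Subgroup.subset_closure (Or.inr (Or.inl ⟨b, h2⟩))
  · exact Subgroup.subset_closure (Or.inr (Or.inr ⟨c, h3⟩))

theorem exists_param (hF : Fintype.card F = 3 ^ (2 * m + 1)) (g : GL (Fin 7) F)
    (hg : g ∈ Usub (F := F) (3 ^ m)) :
    ∃ a b c : F, (g : Matrix (Fin 7) (Fin 7) F) = Smat (3 ^ m) a b c := by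
  have ht : 3 ^ m ≠ 0 := by positivity
  induction hg using Subgroup.closure_induction with
  | mem g hg =>
    rcases hg with ⟨x, h⟩ | ⟨x, h⟩ | ⟨x, h⟩
    · exact ⟨x, 0, 0, by simp [Smat, h, bmat_zero _ ht, cmat_zero _ ht]⟩
    · exact ⟨0, x, 0, by simp [Smat, h, amat_zero _ ht, cmat_zero _ ht]⟩
    · exact ⟨0, 0, x, by simp [Smat, h, amat_zero _ ht, bmat_zero _ ht]⟩
  | one => exact ⟨0, 0, 0, by simp [Smat_zero _ ht]⟩
  | mul g k _ _ ihg ihk =>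
    obtain ⟨a, b, c, h⟩ := ihg
    obtain ⟨x, y, z, k⟩ := ihk
    exact ⟨_, _, _, by rw [Units.val_mul, h, k, Smat_mul hF]⟩
  | inv g _ ih =>
    obtain ⟨a, b, c, h⟩ := ih
    obtain ⟨x, y, z, k⟩ := Smat_inv hF a b c
    refine ⟨x, y, z, ?_⟩
    rw [← h] at k
    exact Units.inv_eq_of_mul_eq_one_right k

theorem Smat_inj {t : ℕ} {a b c x y z : F} (h : Smat t a b c = Smat t x y z) :
    a = x ∧ b = y ∧ c = z := by
  rw [Smat_eq, Smat_eq] at h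
  exact sm_inj h

end

end ReeAux

open ReeAux

/-- Every element of `U(q)` is `S(a,b,c)` for a unique triple `(a,b,c)`; the map
`(a,b,c) ↦ S(a,b,c)` is a bijection from `F_q^3` onto `U(q)`, and `|U(q)| = q^3`. -/
theorem usub_param (m : ℕ) (hm : 0 < m) (F : Type*) [Field F] [Fintype F]
    (hF : Fintype.card F = 3 ^ (2 * m + 1)) :
    (∀ abc : F × F × F, ∃ g : GL (Fin 7) F, g ∈ Usub (F := F) (3 ^ m) ∧
      (g : Matrix (Fin 7) (Fin 7) F) = Smat (3 ^ m) abc.1 abc.2.1 abc.2.2) ∧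
    (∀ g : GL (Fin 7) F, g ∈ Usub (F := F) (3 ^ m) →
      ∃! abc : F × F × F, (g : Matrix (Fin 7) (Fin 7) F) = Smat (3 ^ m) abc.1 abc.2.1 abc.2.2) ∧
    Nat.card ↥(Usub (F := F) (3 ^ m)) = (3 ^ (2 * m + 1)) ^ 3 := by
  have hex : ∀ g : GL (Fin 7) F, g ∈ Usub (F := F) (3 ^ m) →
      ∃! abc : F × F × F,
        (g : Matrix (Fin 7) (Fin 7) F) = Smat (3 ^ m) abc.1 abc.2.1 abc.2.2 := by
    intro g hg
    obtain ⟨a, b, c, h⟩ := exists_param hF g hg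
    refine ⟨(a, b, c), h, ?_⟩
    rintro ⟨x, y, z⟩ h'
    obtain ⟨rfl, rfl, rfl⟩ := Smat_inj (h.symm.trans h')
    rfl
  refine ⟨fun abc => exists_mem hF _ _ _, hex, ?_⟩
  choose f hf hS using fun abc : F × F × F => exists_mem hF abc.1 abc.2.1 abc.2.2
  have hbij : Function.Bijective
      (fun abc : F × F × F => (⟨f abc, hf abc⟩ : ↥(Usub (F := F) (3 ^ m)))) := by
    constructor
    · rintro ⟨a, b, c⟩ ⟨x, y, z⟩ h
      have h1 : f (a, b, c) = f (x, y, z) := congrArg Subtype.val h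
      have h2 := hS (a, b, c)
      rw [h1, hS (x, y, z)] at h2
      obtain ⟨rfl, rfl, rfl⟩ := Smat_inj h2
      rfl
    · rintro ⟨g, hg⟩
      obtain ⟨abc, h, -⟩ := hex g hg
      exact ⟨abc, Subtype.ext (Units.ext ((hS abc).trans h.symm))⟩
  rw [← Nat.card_eq_of_bijective _ hbij, Nat.card_prod, Nat.card_prod, Nat.card_eq_fintype_card, hF]
  ring
end
end

section
/- The derived subgroup of U(q) equals {S(0,b,c) : b, c ∈ F_q}, and every nontrivial element of this subgroup has order 3. -/
open Matrix

set_option linter.unusedSectionVars false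

noncomputable section

open ReePaper

namespace ReePaper

section Generic

variable {F : Type*} [Field F]

/-- `α` with `x ^ t` replaced by an independent variable. -/
def Am (x X : F) : Matrix (Fin 7) (Fin 7) F :=
  !![1, X, 0, 0, -(X^3*x), -(X^3*x^2), X^4*x^2;
     0, 1, x, X*x, -(X^2*x), 0, -(X^3*x^2);
     0, 0, 1, X, -X^2, 0, X^3*x;
     0, 0, 0, 1, X, 0, 0;
     0, 0, 0, 0, 1, -x, X*x;
     0, 0, 0, 0, 0, 1, -X;
     0, 0, 0, 0, 0, 0, 1]

/-- `β` with `x ^ t` replaced by an independent variable. -/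
def Bm (x X : F) : Matrix (Fin 7) (Fin 7) F :=
  !![1, 0, -X, 0, -x, 0, -(X*x);
     0, 1, 0, X, 0, -X^2, 0;
     0, 0, 1, 0, 0, 0, x;
     0, 0, 0, 1, 0, X, 0;
     0, 0, 0, 0, 1, 0, X;
     0, 0, 0, 0, 0, 1, 0;
     0, 0, 0, 0, 0, 0, 1]

/-- `γ` with `x ^ t` replaced by an independent variable. -/
def Cm (x X : F) : Matrix (Fin 7) (Fin 7) F :=
  !![1, 0, 0, -X, 0, -x, -X^2;
     0, 1, 0, 0, -X, 0, x;
     0, 0, 1, 0, 0, X, 0;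
     0, 0, 0, 1, 0, 0, -X;
     0, 0, 0, 0, 1, 0, 0;
     0, 0, 0, 0, 0, 1, 0;
     0, 0, 0, 0, 0, 0, 1]

lemma amat_eq [Fintype F] (t : ℕ) (x : F) : amat t x = Am x (x ^ t) := by
  unfold amat Am
  congr 1
  ext i j
  fin_cases i <;> fin_cases j <;> simp <;> ring

lemma bmat_eq [Fintype F] (t : ℕ) (x : F) : bmat t x = Bm x (x ^ t) := by
  unfold bmat Bm
  congr 1
  ext i j
  fin_cases i <;> fin_cases j <;> simp <;> ring

lemma cmat_eq [Fintype F] (t : ℕ) (x : F) : cmat t x = Cm x (x ^ t) := by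
  unfold cmat Cm
  congr 1
  ext i j
  fin_cases i <;> fin_cases j <;> simp <;> ring

lemma Am_zero : Am (0 : F) 0 = 1 := by
  ext i j
  fin_cases i <;> fin_cases j <;> simp [Am]

lemma Bm_zero : Bm (0 : F) 0 = 1 := by
  ext i j
  fin_cases i <;> fin_cases j <;> simp [Bm]

lemma Cm_zero : Cm (0 : F) 0 = 1 := by
  ext i j
  fin_cases i <;> fin_cases j <;> simp [Cm]

lemma BB (h3 : (3 : F) = 0) (b B r R : F) : Bm b B * Bm r R = Bm (b + r) (B + R) := by
  ext i j
  fin_cases i <;> fin_cases j <;> simp [Bm, Matrix.mul_apply, Fin.sum_univ_succ] <;> grind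

lemma CC (h3 : (3 : F) = 0) (b B r R : F) : Cm b B * Cm r R = Cm (b + r) (B + R) := by
  ext i j
  fin_cases i <;> fin_cases j <;> simp [Cm, Matrix.mul_apply, Fin.sum_univ_succ] <;> grind

lemma CA (h3 : (3 : F) = 0) (c C a A : F) : Cm c C * Am a A = Am a A * Cm c C := by
  ext i j
  fin_cases i <;> fin_cases j <;> simp [Cm, Am, Matrix.mul_apply, Fin.sum_univ_succ] <;> grind

lemma CB (h3 : (3 : F) = 0) (c C b B : F) : Cm c C * Bm b B = Bm b B * Cm c C := by
  ext i j
  fin_cases i <;> fin_cases j <;> simp [Cm, Bm, Matrix.mul_apply, Fin.sum_univ_succ] <;> grind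

set_option maxHeartbeats 4000000 in
lemma BA (h3 : (3 : F) = 0) (b B a A : F) :
    Bm b B * Am a A = Am a A * Bm b B * Cm (-(a*b)) (-(A*B)) := by
  ext i j
  fin_cases i <;> fin_cases j <;>
    simp [Cm, Am, Bm, Matrix.mul_apply, Fin.sum_univ_succ] <;> grind

set_option maxHeartbeats 4000000 in
lemma AA (h3 : (3 : F) = 0) (a A p P : F) :
    Am a A * Am p P = Am (a + p) (A + P) * Bm (-(a*P^3)) (-(A*p)) *
      Cm (a*P^3*p - a^2*P^3) (A*p*P - A^2*p) := by
  ext i j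
  fin_cases i <;> fin_cases j <;>
    simp [Cm, Am, Bm, Matrix.mul_apply, Fin.sum_univ_succ] <;> grind

end Generic

section Group

open scoped commutatorElement

variable {F : Type*} [Field F] [Fintype F]

lemma Smat_eq (t : ℕ) (a b c : F) :
    Smat t a b c = Am a (a ^ t) * Bm b (b ^ t) * Cm c (c ^ t) := by
  rw [Smat, amat_eq, bmat_eq, cmat_eq]

/-- Arithmetic facts on `t` used below. -/
structure Good (F : Type*) [Field F] (t : ℕ) : Prop where
  three : (3 : F) = 0
  pos : t ≠ 0
  add : ∀ x y : F, (x + y) ^ t = x ^ t + y ^ t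
  neg : ∀ x : F, (-x) ^ t = -x ^ t
  pow : ∀ x : F, ((x ^ t) ^ 3) ^ t = x

lemma Good.sub {t : ℕ} (h : Good F t) (x y : F) : (x - y) ^ t = x ^ t - y ^ t := by
  rw [sub_eq_add_neg, h.add, h.neg, sub_eq_add_neg]

lemma Smat_mul {t : ℕ} (h : Good F t) (a b c p r s : F) :
    Smat t a b c * Smat t p r s =
      Smat t (a + p) (b + r - a * (p^t)^3)
        (c + s - p * b + a * (p^t)^3 * p - a^2 * (p^t)^3) := by
  have h3 := h.three
  simp only [Smat_eq]
  set A := a ^ t with hA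
  set B := b ^ t with hB
  set C := c ^ t with hC
  set P := p ^ t with hP
  set R := r ^ t with hR
  set S := s ^ t with hS
  have hP3 : (P ^ 3) ^ t = p := h.pow p
  have e1 : (a + p) ^ t = A + P := h.add _ _
  have e2 : (b + r - a * P ^ 3) ^ t = -(A * p) + (B + R) := by
    rw [h.sub, h.add, mul_pow, hP3]; ring
  have e3 : (c + s - p * b + a * P ^ 3 * p - a^2 * P ^ 3) ^ t =
      (A*p*P - A^2*p) + (-(P * B) + (C + S)) := by
    rw [h.sub, h.add, h.sub, h.add, mul_pow, mul_pow, mul_pow, mul_pow, hP3, ← pow_mul a 2 t,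
      mul_comm 2 t, pow_mul]; ring
  have f2 : b + r - a * P ^ 3 = -(a * P^3) + (b + r) := by ring
  have f3 : c + s - p * b + a * P ^ 3 * p - a^2 * P ^ 3 =
    (a*P^3*p - a^2*P^3) + (-(p*b) + (c + s)) := by ring
  rw [e1, e2, e3, f2, f3, ← CC h3 (a*P^3*p - a^2*P^3), ← CC h3 (-(p*b)), ← CC h3 c,
    ← BB h3 (-(a*P^3)), ← BB h3 b]
  calc Am a A * Bm b B * Cm c C * (Am p P * Bm r R * Cm s S)
      = Am a A * Bm b B * (Cm c C * Am p P) * Bm r R * Cm s S := by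
        simp only [Matrix.mul_assoc]
    _ = Am a A * (Bm b B * Am p P) * (Cm c C * Bm r R) * Cm s S := by
        rw [CA h3]; simp only [Matrix.mul_assoc]
    _ = Am a A * Am p P * Bm b B * (Cm (-(p*b)) (-(P*B)) * Bm r R) * (Cm c C * Cm s S) := by
        rw [CB h3, BA h3]; simp only [Matrix.mul_assoc]
    _ = Am (a + p) (A + P) * Bm (-(a*P^3)) (-(A*p)) *
          (Cm (a*P^3*p - a^2*P^3) (A*p*P - A^2*p) * Bm b B) * Bm r R *
          Cm (-(p*b)) (-(P*B)) * (Cm c C * Cm s S) := by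
        rw [CB h3 (-(p*b)), AA h3]; simp only [Matrix.mul_assoc]
    _ = Am (a + p) (A + P) * Bm (-(a*P^3)) (-(A*p)) * Bm b B *
          (Cm (a*P^3*p - a^2*P^3) (A*p*P - A^2*p) * Bm r R) *
          Cm (-(p*b)) (-(P*B)) * (Cm c C * Cm s S) := by
        rw [CB h3 _ _ b]; simp only [Matrix.mul_assoc]
    _ = _ := by
        rw [CB h3 _ _ r]; simp only [Matrix.mul_assoc]

lemma Smat_zero {t : ℕ} (h : Good F t) : Smat t (0 : F) 0 0 = 1 := by
  simp [Smat_eq, zero_pow h.pos, Am_zero, Bm_zero, Cm_zero]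

lemma Smat_inv_r {t : ℕ} (h : Good F t) (a b c : F) :
    Smat t a b c * Smat t (-a) (-b - a * (a^t)^3) (-c - a*b + a^2*(a^t)^3) = 1 := by
  rw [Smat_mul h, ← Smat_zero h, h.neg]
  have h3 := h.three
  congr 1
  · ring
  · ring
  · linear_combination a^2*(a^t)^3 * h3

/-- `S(a,b,c)` as an element of `GL`. -/
def SG {t : ℕ} (h : Good F t) (a b c : F) : GL (Fin 7) F :=
  ⟨Smat t a b c, Smat t (-a) (-b - a * (a^t)^3) (-c - a*b + a^2*(a^t)^3), Smat_inv_r h a b c,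
    mul_eq_one_comm.mp (Smat_inv_r h a b c)⟩

lemma SG_mul {t : ℕ} (h : Good F t) (a b c p r s : F) :
    SG h a b c * SG h p r s =
      SG h (a + p) (b + r - a * (p^t)^3)
        (c + s - p * b + a * (p^t)^3 * p - a^2 * (p^t)^3) :=
  Units.ext (Smat_mul h a b c p r s)

lemma SG_zero {t : ℕ} (h : Good F t) : SG h (0 : F) 0 0 = 1 := Units.ext (Smat_zero h)

lemma SG_zero_mul {t : ℕ} (h : Good F t) (b c p r s : F) :
    SG h 0 b c * SG h p r s = SG h p (b + r) (c + s - p * b) := by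
  rw [SG_mul]; congr 1 <;> ring

lemma SG_inv {t : ℕ} (h : Good F t) (a b c : F) :
    (SG h a b c)⁻¹ = SG h (-a) (-b - a * (a^t)^3) (-c - a*b + a^2*(a^t)^3) := by
  rw [inv_eq_iff_mul_eq_one]
  exact Units.ext (Smat_inv_r h a b c)

/-- The full group of all `S(a,b,c)`. -/
def TG {t : ℕ} (h : Good F t) : Subgroup (GL (Fin 7) F) where
  carrier := {g | ∃ a b c, g = SG h a b c}
  one_mem' := ⟨0, 0, 0, (SG_zero h).symm⟩
  mul_mem' := by
    rintro _ _ ⟨a, b, c, rfl⟩ ⟨p, r, s, rfl⟩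
    exact ⟨_, _, _, SG_mul h _ _ _ _ _ _⟩
  inv_mem' := by
    rintro _ ⟨a, b, c, rfl⟩
    exact ⟨_, _, _, SG_inv h _ _ _⟩

/-- The group of all `S(0,b,c)`. -/
def KG {t : ℕ} (h : Good F t) : Subgroup (GL (Fin 7) F) where
  carrier := {g | ∃ b c, g = SG h 0 b c}
  one_mem' := ⟨0, 0, (SG_zero h).symm⟩
  mul_mem' := by
    rintro _ _ ⟨b, c, rfl⟩ ⟨r, s, rfl⟩
    exact ⟨_, _, SG_zero_mul h _ _ _ _ _⟩
  inv_mem' := by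
    rintro _ ⟨b, c, rfl⟩
    refine ⟨-b, -c, ?_⟩
    rw [SG_inv]; congr 1 <;> ring

lemma SG_a {t : ℕ} (h : Good F t) (x : F) :
    ((SG h x 0 0 : GL (Fin 7) F) : Matrix (Fin 7) (Fin 7) F) = amat t x := by
  change Smat t x 0 0 = _
  simp [Smat_eq, amat_eq, zero_pow h.pos, Bm_zero, Cm_zero]

lemma SG_b {t : ℕ} (h : Good F t) (x : F) :
    ((SG h 0 x 0 : GL (Fin 7) F) : Matrix (Fin 7) (Fin 7) F) = bmat t x := by
  change Smat t 0 x 0 = _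
  simp [Smat_eq, bmat_eq, zero_pow h.pos, Am_zero, Cm_zero]

lemma SG_c {t : ℕ} (h : Good F t) (x : F) :
    ((SG h 0 0 x : GL (Fin 7) F) : Matrix (Fin 7) (Fin 7) F) = cmat t x := by
  change Smat t 0 0 x = _
  simp [Smat_eq, cmat_eq, zero_pow h.pos, Am_zero, Bm_zero]

lemma U_le {t : ℕ} (h : Good F t) : Usub (F := F) t ≤ TG h := by
  rw [Usub, Subgroup.closure_le]
  rintro g (⟨x, hx⟩ | ⟨x, hx⟩ | ⟨x, hx⟩)
  · exact ⟨x, 0, 0, Units.ext (hx.trans (SG_a h x).symm)⟩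
  · exact ⟨0, x, 0, Units.ext (hx.trans (SG_b h x).symm)⟩
  · exact ⟨0, 0, x, Units.ext (hx.trans (SG_c h x).symm)⟩

lemma SG_comm {t : ℕ} (h : Good F t) (a b c p r s : F) :
    ∃ y, ⁅SG h a b c, SG h p r s⁆ = SG h 0 (p * (a^t)^3 - a * (p^t)^3) y := by
  refine ⟨(c + s - p * b + a * (p^t)^3 * p - a^2 * (p^t)^3)
    - (s + c - a * r + p * (a^t)^3 * a - p^2 * (a^t)^3)
    + (a + p) * (p * (a^t)^3 - a * (p^t)^3), ?_⟩
  rw [commutatorElement_def, mul_assoc, ← _root_.mul_inv_rev, mul_inv_eq_iff_eq_mul, SG_mul, SG_mul,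
    SG_zero_mul]
  congr 1 <;> ring

lemma SG_comm_ba {t : ℕ} (h : Good F t) (b : F) : ⁅SG h 0 b 0, SG h 1 0 0⁆ = SG h 0 0 (-b) := by
  rw [commutatorElement_def, mul_assoc, ← _root_.mul_inv_rev, mul_inv_eq_iff_eq_mul, SG_mul, SG_mul,
    SG_zero_mul]
  congr 1 <;> simp [zero_pow h.pos]

lemma comm_le {t : ℕ} (h : Good F t) : ⁅Usub (F := F) t, Usub (F := F) t⁆ ≤ KG h := by
  rw [Subgroup.commutator_le]
  intro g hg k hk
  obtain ⟨a, b, c, rfl⟩ := U_le h hg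
  obtain ⟨p, r, s, rfl⟩ := U_le h hk
  obtain ⟨y, hy⟩ := SG_comm h a b c p r s
  exact ⟨_, y, hy⟩

lemma le_comm {t : ℕ} (h : Good F t) (hsq : ∀ s : F, ∃ l : F, l * (l^t)^3 = s^2)
    (hne : ∃ d : F, (d^t)^3 ≠ d) : KG h ≤ ⁅Usub (F := F) t, Usub (F := F) t⁆ := by
  set D := ⁅Usub (F := F) t, Usub (F := F) t⁆ with hD
  have ha : ∀ x, SG h x 0 0 ∈ Usub (F := F) t := fun x =>
    Subgroup.subset_closure (Or.inl ⟨x, SG_a h x⟩)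
  have hb : ∀ x, SG h 0 x 0 ∈ Usub (F := F) t := fun x =>
    Subgroup.subset_closure (Or.inr (Or.inl ⟨x, SG_b h x⟩))
  have hc : ∀ c, SG h 0 0 c ∈ D := by
    intro c
    have := Subgroup.commutator_mem_commutator (hb (-c)) (ha 1)
    rwa [SG_comm_ba, neg_neg] at this
  obtain ⟨d, hd⟩ := hne
  have hd' : (d^t)^3 - d ≠ 0 := sub_ne_zero.mpr hd
  have key : ∀ s : F, ∃ y, SG h 0 (s^2 * ((d^t)^3 - d)) y ∈ D := by
    intro s
    obtain ⟨l, hl⟩ := hsq s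
    obtain ⟨y, hy⟩ := SG_comm h (l * d) 0 0 l 0 0
    refine ⟨y, ?_⟩
    have := Subgroup.commutator_mem_commutator (ha (l*d)) (ha l)
    rw [hy] at this
    convert this using 2
    rw [← hl, mul_pow]; ring
  rintro _ ⟨b, c, rfl⟩
  obtain ⟨w, hw⟩ : ∃ w, w * ((d^t)^3 - d) = b := ⟨b / _, div_mul_cancel₀ _ hd'⟩
  obtain ⟨y, hy⟩ := key (w + 1)
  obtain ⟨z, hz⟩ := key (w - 1)
  have h1 := D.mul_mem (D.mul_mem hy (D.inv_mem hz)) (hc (c - y + z))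
  rw [SG_inv, SG_zero_mul, neg_zero, SG_zero_mul] at h1
  convert h1 using 2
  · rw [← hw]; linear_combination (-w * ((d^t)^3 - d)) * h.three
  · ring

lemma good_of_card (m : ℕ) (hF : Fintype.card F = 3 ^ (2 * m + 1)) : Good F (3 ^ m) := by
  have hp : Fact (Nat.Prime 3) := ⟨Nat.prime_three⟩
  have hc : CharP F 3 := by
    obtain ⟨p, hp'⟩ := CharP.exists F
    obtain ⟨n, hpp, hn⟩ := FiniteField.card F p
    have : p ∣ 3 ^ (2 * m + 1) := by
      rw [← hF, hn]; exact dvd_pow_self _ n.ne_zero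
    have := (Nat.prime_dvd_prime_iff_eq hpp Nat.prime_three).mp (hpp.dvd_of_dvd_pow this)
    rwa [← this]
  refine ⟨by exact_mod_cast CharP.cast_eq_zero F 3, by positivity, fun x y => ?_, fun x => ?_,
    fun x => ?_⟩
  · exact add_pow_char_pow x y 3 m
  · exact Odd.neg_pow (Odd.pow (by decide)) x
  · rw [← pow_mul, ← pow_mul]
    have : 3 ^ m * (3 * 3 ^ m) = Fintype.card F := by rw [hF]; ring
    rw [this, FiniteField.pow_card]

end Group

end ReePaper

open ReePaper

/-- The derived subgroup of `U(q)` equals `{S(0,b,c) : b, c ∈ F_q}`, and every nontrivial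
element of it has order 3. -/
theorem usub_derived (m : ℕ) (hm : 0 < m) (F : Type*) [Field F] [Fintype F]
    (hF : Fintype.card F = 3 ^ (2 * m + 1)) :
    (∀ g : GL (Fin 7) F, g ∈ ⁅Usub (F := F) (3 ^ m), Usub (F := F) (3 ^ m)⁆ ↔
      ∃ b c : F, (g : Matrix (Fin 7) (Fin 7) F) = Smat (3 ^ m) 0 b c) ∧
    (∀ g : GL (Fin 7) F, g ∈ ⁅Usub (F := F) (3 ^ m), Usub (F := F) (3 ^ m)⁆ → g ≠ 1 →
      orderOf g = 3) := by
  have h : Good F (3 ^ m) := good_of_card m hF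
  have hsq : ∀ s : F, ∃ l : F, l * (l^(3^m))^3 = s^2 := by
    intro s
    refine ⟨s ^ (3 ^ (m+1) - 1), ?_⟩
    rcases eq_or_ne s 0 with rfl | hs
    · have : 3 ^ (m+1) - 1 ≠ 0 := by
        have : 1 < 3 ^ (m+1) := Nat.one_lt_pow (by omega) (by norm_num)
        omega
      simp [zero_pow this]
    · apply mul_right_cancel₀ hs
      have e : s ^ (3 ^ (m+1) - 1) * ((s ^ (3 ^ (m+1) - 1))^(3^m))^3 * s
          = s ^ (Fintype.card F * 3) := by
        rw [← pow_mul, ← pow_mul, ← pow_add, ← pow_succ]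
        congr 1
        rw [hF]
        obtain ⟨k, hk⟩ : ∃ k, 3 ^ (m+1) = k + 1 := ⟨3 ^ (m+1) - 1, by
          have : 0 < 3 ^ (m+1) := by positivity
          omega⟩
        have h2 : 3 ^ (2*m+1) * 3 = 3 ^ (m+1) * 3 ^ (m+1) := by ring
        have h4 : 3 ^ m * 3 = 3 ^ (m+1) := by ring
        rw [h2, h4, hk]
        simp only [Nat.add_sub_cancel]
        ring
      rw [e, pow_mul, FiniteField.pow_card]
      ring
  have hne : ∃ d : F, (d^(3^m))^3 ≠ d := by
    by_contra! hcon
    have hlt : 3 ^ (m+1) < Fintype.card F := by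
      rw [hF]; exact Nat.pow_lt_pow_right (by norm_num) (by omega)
    have h1 : 1 < 3 ^ (m+1) := Nat.one_lt_pow (by omega) (by norm_num)
    have hp0 := FiniteField.X_pow_card_sub_X_ne_zero F h1
    have hdeg := FiniteField.X_pow_card_sub_X_natDegree_eq F h1
    have := Polynomial.card_le_degree_of_subset_roots
      (p := (Polynomial.X ^ (3 ^ (m+1)) - Polynomial.X : Polynomial F)) (Z := Finset.univ) (by
        intro x _
        rw [Polynomial.mem_roots hp0]
        have := hcon x
        rw [← pow_mul, ← pow_succ] at this
        simp [this])
    rw [hdeg, Finset.card_univ] at this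
    omega
  have hDK : ⁅Usub (F := F) (3 ^ m), Usub (F := F) (3 ^ m)⁆ = KG h :=
    le_antisymm (comm_le h) (le_comm h hsq hne)
  rw [hDK]
  constructor
  · intro g
    constructor
    · rintro ⟨b, c, rfl⟩
      exact ⟨b, c, rfl⟩
    · rintro ⟨b, c, hg⟩
      exact ⟨b, c, Units.ext hg⟩
  · rintro g ⟨b, c, rfl⟩ hg
    have hp : Fact (Nat.Prime 3) := ⟨Nat.prime_three⟩
    refine orderOf_eq_prime ?_ hg
    rw [pow_succ, pow_two, SG_zero_mul, SG_zero_mul, ← SG_zero h]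
    have h3 := h.three
    congr 1
    · linear_combination b * h3
    · linear_combination c * h3
end
end
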